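/- Let p be a prime, let K be a compact Hausdorff abelian topological group containing a closed subgroup topologically isomorphic to ℤ(p)^ω (the countable power of the cyclic group of order p, with the product topology), and let G be a dense locally minimal subgroup of K. Then the cardinality of G is at least 𝔠 = 2^ℵ₀. -/

import Mathlib

/-- A Hausdorff topological abelian group `(G, τ)` is *locally minimal* if there exists a
neighborhood `V` of `0` such that the only Hausdorff group topology `σ` coarser than `τ`
for which `V` is still a `σ`-neighborhood of `0` is `τ` itself. -/
def LocallyMinimal (G : Type*) [AddGroup G] [τ : TopologicalSpace G] : Prop :=
  ∃ V ∈ nhds (0 : G), ∀ σ : TopologicalSpace G, τ ≤ σ →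
    @IsTopologicalAddGroup G σ _ → @T2Space G σ → V ∈ @nhds G σ 0 → σ = τ

/-- The cyclic group `ℤ(p) = ZMod p` carries the discrete topology. -/
instance (p : ℕ) : TopologicalSpace (ZMod p) := ⊥

/-!
If `H` is a closed normal subgroup of `K` inside a small neighbourhood of `0` with `H ∩ G = 0`, then
the topology `G` receives from `K ⧸ H` is a Hausdorff group topology coarser than that of `G` in
which a prescribed neighbourhood of `0` remains one. Local minimality makes the two topologies agree
and density then forces `H = 0`. So `G` meets every small nontrivial closed normal subgroup. A small
subgroup of prime order is therefore contained in `G`, which puts in `G` every element of a copy of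
`ℤ(p)^ω` in `K` that vanishes on a suitable finite set of coordinates: `2 ^ ℵ₀` elements.
-/

open Cardinal Filter Function Set Topology
open scoped Pointwise

universe u v w

section LocallyEssential

theorem eq_of_map_eq_of_isInducing_domRestrict {X Y : Type*} [TopologicalSpace X] [T2Space X]
    [TopologicalSpace Y] {s : Set X} (hs : Dense s) {f : X → Y} {x y : X} (hf : ContinuousAt f x)
    (hfs : IsInducing (s.domRestrict f)) (hy : y ∈ s) (hxy : f x = f y) : x = y := by
  have : (comap ((↑) : s → X) (𝓝 x)).NeBot := hs.isDenseInducing_val.comap_nhds_neBot x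
  have tendsto_domRestrict : Tendsto (s.domRestrict f) (comap (↑) (𝓝 x)) (𝓝 (f y)) :=
    hxy ▸ hf.tendsto.comp tendsto_comap
  have le_nhds : comap ((↑) : s → X) (𝓝 x) ≤ 𝓝 ⟨y, hy⟩ :=
    hfs.nhds_eq_comap ⟨y, hy⟩ ▸ tendsto_domRestrict.le_comap
  exact tendsto_nhds_unique tendsto_comap (continuousAt_subtype_val.mono_left le_nhds)

theorem LocallyMinimal.exists_nhds_isInducing {G : Type u} [AddGroup G] [TopologicalSpace G]
    (hG : LocallyMinimal G) :
    ∃ V ∈ 𝓝 (0 : G), ∀ (L : Type v) [AddGroup L] [TopologicalSpace L] [IsTopologicalAddGroup L]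
      [T2Space L] (f : G →+ L), Continuous f → Injective f → V ∈ comap f (𝓝 0) → IsInducing f := by
  obtain ⟨V, hV, hmin⟩ := hG
  refine ⟨V, hV, fun L _ _ _ _ f hf hinj hVf ↦ ⟨Eq.symm ?_⟩⟩
  refine hmin _ hf.le_induced (topologicalAddGroup_induced f) ?_ ?_
  · let _ : TopologicalSpace G := .induced f inferInstance
    exact .of_injective_continuous hinj continuous_induced_dom
  · rwa [nhds_induced, map_zero]

theorem injective_mk'_domRestrict {K : Type*} [AddGroup K] {G H : AddSubgroup K} [H.Normal]
    (h : Disjoint H G) : Injective ((QuotientAddGroup.mk' H).domRestrict G) := by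
  rwa [← AddMonoidHom.ker_eq_bot_iff, AddMonoidHom.ker_domRestrict, QuotientAddGroup.ker_mk',
    AddSubgroup.addSubgroupOf_eq_bot]

variable {K : Type*} [AddGroup K] [TopologicalSpace K]

theorem exists_nhds_zero_forall_mem_comap_mk [IsTopologicalAddGroup K] {U : Set K}
    (hU : U ∈ 𝓝 0) :
    ∃ W ∈ 𝓝 (0 : K), ∀ H : AddSubgroup K, (H : Set K) ⊆ W →
      U ∈ comap ((↑) : K → K ⧸ H) (𝓝 (0 : K)) := by
  obtain ⟨W, hW, hWU⟩ := exists_nhds_zero_half hU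
  refine ⟨W, hW, fun H hHW ↦ ⟨(↑) '' W, ?_, ?_⟩⟩
  · exact QuotientAddGroup.isOpenMap_coe.image_mem_nhds hW
  · rw [QuotientAddGroup.preimage_image_mk_eq_add]
    exact (add_subset_add_left hHW).trans (add_subset_iff.2 hWU)

/-- A subgroup `G` of a topological group `K` is *locally essential* if, for some neighbourhood `W`
of `0`, it meets nontrivially every nontrivial closed normal subgroup `H ⊆ W` of `K`. The condition
on `H` is encoded contrapositively. -/
def LocallyEssential (G : AddSubgroup K) : Prop :=
  ∃ W ∈ 𝓝 (0 : K), ∀ H : AddSubgroup K, H.Normal → IsClosed (H : Set K) → (H : Set K) ⊆ W →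
    Disjoint H G → H = ⊥

theorem LocallyMinimal.locallyEssential [IsTopologicalAddGroup K] [T2Space K] {G : AddSubgroup K}
    (hmin : LocallyMinimal G) (hG : Dense (G : Set K)) : LocallyEssential G := by
  obtain ⟨V, hV, hVmin⟩ := hmin.exists_nhds_isInducing
  obtain ⟨U, hU, hUV⟩ := mem_nhds_subtype (G : Set K) 0 V |>.1 hV
  obtain ⟨W, hW, hWU⟩ := exists_nhds_zero_forall_mem_comap_mk hU
  refine ⟨W, hW, fun H _ hH hHW hHG ↦ (AddSubgroup.eq_bot_iff_forall H).2 fun x hx ↦ ?_⟩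
  have hVf : V ∈ comap ((QuotientAddGroup.mk' H).domRestrict G) (𝓝 0) := by
    obtain ⟨T, hT, hTU⟩ := hWU H hHW
    exact ⟨T, hT, fun g hg ↦ hUV (hTU hg)⟩
  have isInducing_domRestrict : IsInducing ((QuotientAddGroup.mk' H).domRestrict G) :=
    hVmin (K ⧸ H) _ (QuotientAddGroup.continuous_mk.comp continuous_subtype_val)
      (injective_mk'_domRestrict hHG) hVf
  exact eq_of_map_eq_of_isInducing_domRestrict hG QuotientAddGroup.continuous_mk.continuousAt
    isInducing_domRestrict G.zero_mem ((QuotientAddGroup.eq_zero_iff x).2 hx)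

end LocallyEssential

section PrimeOrder

theorem mem_or_disjoint_zmultiples {K : Type*} [AddGroup K] (G : AddSubgroup K) {x : K}
    (hx : (addOrderOf x).Prime) : x ∈ G ∨ Disjoint (AddSubgroup.zmultiples x) G := by
  have : Fact (Nat.card (AddSubgroup.zmultiples x)).Prime := ⟨by rwa [Nat.card_zmultiples]⟩
  rw [disjoint_comm, ← AddSubgroup.addSubgroupOf_eq_bot, ← AddSubgroup.zmultiples_le,
    ← AddSubgroup.addSubgroupOf_eq_top]
  exact (AddSubgroup.eq_bot_or_eq_top_of_prime_card _).symm

variable {K : Type w} [AddCommGroup K] [TopologicalSpace K] {G : AddSubgroup K} {p : ℕ}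

theorem LocallyEssential.exists_nhds_forall_mem [T1Space K] (hG : LocallyEssential G)
    (hp : p.Prime) :
    ∃ W ∈ 𝓝 (0 : K), ∀ x : K, p • x = 0 → (AddSubgroup.zmultiples x : Set K) ⊆ W → x ∈ G := by
  obtain ⟨W, hW, hWG⟩ := hG
  refine ⟨W, hW, fun x hpx hxW ↦ ?_⟩
  obtain rfl | hx0 := eq_or_ne x 0
  · exact G.zero_mem
  have : Fact p.Prime := ⟨hp⟩
  have hx : addOrderOf x = p := addOrderOf_eq_prime hpx hx0
  have isClosed_zmultiples : IsClosed (AddSubgroup.zmultiples x : Set K) :=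
    (finite_zmultiples.2 (addOrderOf_pos_iff.1 (hx ▸ hp.pos))).isClosed
  refine (mem_or_disjoint_zmultiples G (hx ▸ hp)).resolve_right fun hdisj ↦ hx0 ?_
  exact AddSubgroup.zmultiples_eq_bot.1 (hWG _ inferInstance isClosed_zmultiples hxW hdisj)

theorem exists_finset_forall_mem_of_mem_nhds_pi {ι : Type*} {A : ι → Type*}
    [∀ i, TopologicalSpace (A i)] {x : ∀ i, A i} {s : Set (∀ i, A i)} (hs : s ∈ 𝓝 x) :
    ∃ I : Finset ι, ∀ y : ∀ i, A i, (∀ i ∈ I, y i = x i) → y ∈ s := by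
  rw [nhds_pi, mem_pi'] at hs
  obtain ⟨I, t, ht, hts⟩ := hs
  exact ⟨I, fun y hy ↦ hts fun i hi ↦ hy i hi ▸ mem_of_mem_nhds (ht i)⟩

variable {ι : Type u} {A : ι → Type v} [∀ i, AddGroup (A i)] [∀ i, TopologicalSpace (A i)]

theorem LocallyEssential.exists_finset_forall_map_mem [T1Space K] (hG : LocallyEssential G)
    (hp : p.Prime) {φ : (∀ i, A i) →+ K} (hφ : Continuous φ) :
    ∃ I : Finset ι, ∀ y : ∀ i, A i, p • y = 0 → (∀ i ∈ I, y i = 0) → φ y ∈ G := by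
  obtain ⟨W, hW, hWG⟩ := hG.exists_nhds_forall_mem hp
  obtain ⟨I, hI⟩ := exists_finset_forall_mem_of_mem_nhds_pi
    (hφ.continuousAt.preimage_mem_nhds ((map_zero φ).symm ▸ hW))
  refine ⟨I, fun y hpy hy ↦ hWG _ (by rw [← map_nsmul, hpy, map_zero]) ?_⟩
  rintro _ ⟨k, rfl⟩
  have map_zsmul_mem : φ (k • y) ∈ W := hI _ fun i hi ↦ by simp [hy i hi]
  rwa [map_zsmul] at map_zsmul_mem

end PrimeOrder

section Counting

theorem lift_two_power_mk_le_of_forall_disjoint {ι : Type u} [Infinite ι] {α : Type w} {s : Set α}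
    {f : Set ι → α} (hf : Injective f) (I : Finset ι)
    (hs : ∀ S : Set ι, Disjoint S I → f S ∈ s) : lift.{w} (2 ^ #ι) ≤ lift.{u} #s := by
  have disjoint_image (S : Set ↥((I : Set ι)ᶜ)) : Disjoint ((↑) '' S) (I : Set ι) :=
    disjoint_compl_left.mono_left (Subtype.coe_image_subset _ S)
  let g : Set ↥((I : Set ι)ᶜ) → s := fun S ↦ ⟨f ((↑) '' S), hs _ (disjoint_image S)⟩
  have hg : Injective g := fun S T h ↦
    Subtype.val_injective.image_injective (hf (congrArg Subtype.val h))
  calc lift.{w} (2 ^ #ι) = lift.{w} #(Set ↥((I : Set ι)ᶜ)) := by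
        rw [mk_set, mk_compl_of_infinite _ ((lt_aleph0_of_finite I).trans_le (aleph0_le_mk ι))]
    _ ≤ lift.{u} #s := lift_mk_le_lift_mk_of_injective hg

open Classical in
theorem piecewise_zero_injective {ι : Type*} {A : ι → Type*} [∀ i, Zero (A i)] {a : ∀ i, A i}
    (ha : ∀ i, a i ≠ 0) : Injective fun S : Set ι ↦ S.piecewise a 0 := by
  have mem_iff (S : Set ι) (i : ι) : i ∈ S ↔ S.piecewise a 0 i ≠ 0 := by
    by_cases hi : i ∈ S <;> simp [hi, ha i]
  intro S T hST
  ext i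
  rw [mem_iff S, mem_iff T]
  exact (congrFun hST i).congr_left.not

end Counting

open Classical in
theorem card_ge_continuum_of_locallyMinimal_general {K : Type w} [AddCommGroup K]
    [TopologicalSpace K] [IsTopologicalAddGroup K] [T2Space K] {ι : Type u} [Infinite ι]
    {A : ι → Type v} [∀ i, AddGroup (A i)] [∀ i, TopologicalSpace (A i)] {p : ℕ} (hp : p.Prime)
    {a : ∀ i, A i} (ha : ∀ i, addOrderOf (a i) = p) {φ : (∀ i, A i) →+ K} (hφ : Continuous φ)
    (hφ_inj : Injective φ) {G : AddSubgroup K} (hG : Dense (G : Set K)) (hmin : LocallyMinimal G) :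
    lift.{w} (2 ^ #ι) ≤ lift.{u} #G := by
  obtain ⟨I, hI⟩ := (hmin.locallyEssential hG).exists_finset_forall_map_mem hp hφ
  have a_ne_zero (i : ι) : a i ≠ 0 := fun h ↦ hp.ne_one (by rw [← ha i, h, addOrderOf_zero])
  have nsmul_piecewise (S : Set ι) : p • S.piecewise a 0 = 0 := by
    ext i
    by_cases hi : i ∈ S <;> simp [hi, ← ha i, addOrderOf_nsmul_eq_zero]
  refine lift_two_power_mk_le_of_forall_disjoint (s := (G : Set K))
    (hφ_inj.comp (piecewise_zero_injective a_ne_zero)) I fun S hS ↦ ?_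
  exact hI _ (nsmul_piecewise S) fun i hi ↦
    piecewise_eq_of_notMem S a 0 (disjoint_right.1 hS hi)

/-- Let `p` be a prime, `K` a compact Hausdorff abelian group containing a closed
subgroup topologically isomorphic to `ℤ(p)^ω` (the countable power of the cyclic group of
order `p`, with the product topology), and `G` a dense locally minimal subgroup of `K`.
Then `|G| ≥ 𝔠`. -/
theorem card_ge_continuum_of_locallyMinimal {K : Type*} [AddCommGroup K]
    [TopologicalSpace K] [IsTopologicalAddGroup K] [T2Space K] [CompactSpace K]
    (p : ℕ) (hp : p.Prime) (N : AddSubgroup K) (hN : IsClosed (N : Set K))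
    (e : ↥N ≃+ (ℕ → ZMod p)) (he : Continuous e) (he' : Continuous e.symm)
    (G : AddSubgroup K) (hG : Dense (G : Set K)) (hmin : LocallyMinimal ↥G) :
    Cardinal.continuum ≤ Cardinal.mk ↥G := by
  simpa using card_ge_continuum_of_locallyMinimal_general hp (fun _ : ℕ ↦ ZMod.addOrderOf_one p)
    (φ := N.subtype.comp e.symm.toAddMonoidHom) (continuous_subtype_val.comp he')
    (Subtype.val_injective.comp e.symm.injective) hG hmin
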